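/- Let δe, δb be relations on a type α, let S ⊆ R ⊆ α with R ≠ α (there is some state outside R), and suppose R satisfies the termination property for δe, δb. Then there is no relation δ''p on α such that δ''p ∩ δb = ∅, δ''p ∩ δe = ∅, every state of α has an outgoing transition in δ''p ∪ δe, and every infinite p''[]₂δe computation contains a state in S. -/

import Mathlib

variable {α : Type*}

/-- `Rp δb R` is the set of states outside `R` from which some state of `R`
can be reached by a transition not in `δb`. -/
def Rp (δb : Set (α × α)) (R : Set α) : Set α :=
  {s | s ∉ R ∧ ∃ t ∈ R, (s, t) ∉ δb}

/-- The termination property of the fixed-point set `R`. -/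
def TermProp (δe δb : Set (α × α)) (R : Set α) : Prop :=
  ∀ s ∉ R, (∃ u, u ∉ R ∪ Rp δb R ∧ (s, u) ∈ δe) ∨
    ((¬ ∃ t ∈ R ∪ Rp δb R, (s, t) ∈ δe) ∧ s ∉ Rp δb R)

/-- A `p[]₂δe` computation (infinite). -/
def Comp2 (δp δe : Set (α × α)) (σ : ℕ → α) : Prop :=
  (∀ i, (σ i, σ (i + 1)) ∈ δp ∪ δe) ∧
  (∀ i, (σ i, σ (i + 1)) ∈ δe → (∃ t, (σ (i + 1), t) ∈ δp) →
    (σ (i + 1), σ (i + 2)) ∈ δp)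

/-!
From any state outside `R` the environment has a strategy that keeps the computation outside `R`.
A `δb`-safe program transition enters `R` only from `Rp δb R`, so it suffices that the program never
has to move at a state of `Rp δb R`. It is forced to move only right after an environment
transition, and the termination property lets all of these end outside `R ∪ Rp δb R`. Where no
environment transition of this kind exists, the state itself is outside `Rp δb R`, and a program
transition from it is harmless.
-/

theorem exists_seq_of_forall_exists_extension {P : α → α → Prop} {Q : α → α → α → Prop}
    (hext : ∀ s t, P s t → ∃ u, P t u ∧ Q s t u) {s t : α} (hst : P s t) :
    ∃ σ : ℕ → α, σ 0 = s ∧ ∀ i, P (σ i) (σ (i + 1)) ∧ Q (σ i) (σ (i + 1)) (σ (i + 2)) := by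
  choose! next hnextP hnextQ using hext
  let pair : ℕ → α × α := fun n => (fun e : α × α => (e.2, next e.1 e.2))^[n] (s, t)
  have pair_succ (n : ℕ) : pair (n + 1) = ((pair n).2, next (pair n).1 (pair n).2) :=
    Function.iterate_succ_apply' ..
  have hpair (n : ℕ) : P (pair n).1 (pair n).2 := by
    induction n with
    | zero => exact hst
    | succ n ih => simpa only [pair_succ] using hnextP _ _ ih
  refine ⟨fun n => (pair n).1, rfl, fun i => ?_⟩
  simp only [pair_succ]
  exact ⟨hpair i, hnextQ _ _ (hpair i)⟩

/-- A step that keeps a `p[]₂δe` computation outside `R`: its target is outside `R`, and outside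
`Rp δb R` as well after an environment transition, since a program transition may be
forced next and must not be able to enter `R`. -/
structure AvoidingStep (δp δe δb : Set (α × α)) (R : Set α) (s t : α) : Prop where
  mem_union : (s, t) ∈ δp ∪ δe
  target_notMem : t ∉ R
  target_notMem_Rp : (s, t) ∈ δe → t ∉ Rp δb R

section Avoidance

variable {δp δe δb : Set (α × α)} {R : Set α}

theorem AvoidingStep.of_mem_program (hb : Disjoint δp δb) (he : Disjoint δp δe) {s t : α}
    (hs : s ∉ R) (hsRp : s ∉ Rp δb R) (hst : (s, t) ∈ δp) : AvoidingStep δp δe δb R s t where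
  mem_union := .inl hst
  target_notMem ht := hsRp ⟨hs, t, ht, hb.notMem_of_mem_left hst⟩
  target_notMem_Rp hst' := absurd hst' (he.notMem_of_mem_left hst)

theorem AvoidingStep.of_mem_environment {s t : α} (hst : (s, t) ∈ δe) (ht : t ∉ R ∪ Rp δb R) :
    AvoidingStep δp δe δb R s t where
  mem_union := .inr hst
  target_notMem h := ht (.inl h)
  target_notMem_Rp _ h := ht (.inr h)

theorem TermProp.exists_avoidingStep (hR : TermProp δe δb R) (hb : Disjoint δp δb)
    (he : Disjoint δp δe) {s t : α} (hst : (s, t) ∈ δp ∪ δe) (hs : s ∉ R) :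
    ∃ u, AvoidingStep δp δe δb R s u := by
  rcases hR s hs with ⟨u, hu, hsu⟩ | ⟨hno_env, hsRp⟩
  · exact ⟨u, .of_mem_environment hsu hu⟩
  · rcases hst with hprog | henv
    · exact ⟨t, .of_mem_program hb he hs hsRp hprog⟩
    · exact ⟨t, .of_mem_environment henv fun ht => hno_env ⟨t, ht, henv⟩⟩

theorem AvoidingStep.exists_extension (hR : TermProp δe δb R) (hb : Disjoint δp δb)
    (he : Disjoint δp δe) (htotal : ∀ s, ∃ t, (s, t) ∈ δp ∪ δe) {s t : α}
    (hst : AvoidingStep δp δe δb R s t) :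
    ∃ u, AvoidingStep δp δe δb R t u ∧
      ((s, t) ∈ δe → (∃ v, (t, v) ∈ δp) → (t, u) ∈ δp) := by
  by_cases hforced : (s, t) ∈ δe ∧ ∃ v, (t, v) ∈ δp
  · obtain ⟨henv, v, hv⟩ := hforced
    exact ⟨v, .of_mem_program hb he hst.target_notMem (hst.target_notMem_Rp henv) hv,
      fun _ _ => hv⟩
  · obtain ⟨v, hv⟩ := htotal t
    obtain ⟨u, hu⟩ := hR.exists_avoidingStep hb he hv hst.target_notMem
    exact ⟨u, hu, fun henv hprog => absurd ⟨henv, hprog⟩ hforced⟩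

theorem TermProp.exists_comp2_forall_notMem (hR : TermProp δe δb R) (hb : Disjoint δp δb)
    (he : Disjoint δp δe) (htotal : ∀ s, ∃ t, (s, t) ∈ δp ∪ δe) {s : α} (hs : s ∉ R) :
    ∃ σ : ℕ → α, σ 0 = s ∧ Comp2 δp δe σ ∧ ∀ i, σ i ∉ R := by
  obtain ⟨v, hv⟩ := htotal s
  obtain ⟨t, hst⟩ := hR.exists_avoidingStep hb he hv hs
  obtain ⟨σ, rfl, hσ⟩ := exists_seq_of_forall_exists_extension
    (fun _ _ h => AvoidingStep.exists_extension hR hb he htotal h) hst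
  refine ⟨σ, rfl, ⟨fun i => (hσ i).1.mem_union, fun i => (hσ i).2⟩, fun i => ?_⟩
  cases i with
  | zero => exact hs
  | succ i => exact (hσ i).1.target_notMem

end Avoidance

theorem stmt6 (δe δb : Set (α × α)) (S R : Set α)
    (hSR : S ⊆ R) (hRne : ∃ s, s ∉ R) (hR : TermProp δe δb R) :
    ¬ ∃ δ''p : Set (α × α), δ''p ∩ δb = ∅ ∧ δ''p ∩ δe = ∅ ∧
      (∀ s : α, ∃ t, (s, t) ∈ δ''p ∪ δe) ∧
      (∀ σ : ℕ → α, Comp2 δ''p δe σ → ∃ i, σ i ∈ S) := by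
  rintro ⟨δp, hb, he, htotal, hstab⟩
  obtain ⟨s, hs⟩ := hRne
  obtain ⟨σ, -, hσ, havoid⟩ := hR.exists_comp2_forall_notMem
    (Set.disjoint_iff_inter_eq_empty.mpr hb) (Set.disjoint_iff_inter_eq_empty.mpr he) htotal hs
  obtain ⟨i, hi⟩ := hstab σ hσ
  exact havoid i (hSR hi)
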